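/- arXiv:1811.09964 — 6 statements merged into one kernel-verified Lean document; each statement's English description precedes it below -/
import Mathlib

section
/- Suppose there is an ordinal α such that D {n} α {(true, n)} holds for every natural number n (i.e. the sequent consisting of the single positive literal E(n) is derivable with ordinal bound α from the side set {n}). Then there exists a function f : ℕ → Ordinal such that f n < f m whenever n ≺ m, and f m < ω^(α+1) for every m. (Theorem 7, an extension of a result of Takeuti.) -/
/-!
Sequents reachable from `{(true, n)}` contain only positive literals, so the axiom clause never
applies. By induction on a derivation of `D R ℰ β Γ` without negative literals, some element of
the side set `ℰ` has `≺*`-rank at most `β`: in a `prg` step with principal literal `m`, either some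
premise already yields an element of `ℰ` of rank at most `β₀`, or every `n ≺* m` has rank at most
`β₀`, so that `m` itself has rank at most `β₀ + 1 ≤ β`. Applied to `ℰ = {n}`, every `n` has rank at
most `α`, and `α < α + 1 ≤ ω ^ (α + 1)`; the rank function is the required embedding.
-/

open Ordinal

/-- The calculus `Diag(∅)+(prg)^D`: `D R ℰ β Γ` says that the sequent `Γ` of literals
(`(true, n)` is the positive literal `E(n)`, `(false, n)` the negative `Ē(n)`) is derivable
with ordinal bound `β` from the finite side set `ℰ`. -/
inductive D (R : ℕ → ℕ → Prop) : Finset ℕ → Ordinal → Finset (Bool × ℕ) → Prop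
  | ax {ℰ : Finset ℕ} {β : Ordinal} {Γ : Finset (Bool × ℕ)} (n : ℕ)
      (h : (false, n) ∈ Γ) : D R ℰ β Γ
  | rep {ℰ : Finset ℕ} {β : Ordinal} {Γ : Finset (Bool × ℕ)} (γ : Ordinal)
      (hγ : γ < β) (hd : D R ℰ γ Γ) : D R ℰ β Γ
  | prg {ℰ : Finset ℕ} {β : Ordinal} {Γ : Finset (Bool × ℕ)} (m : ℕ)
      (hm : (true, m) ∈ Γ) (hℰ : m ∈ ℰ) (β₀ : Ordinal) (hβ₀ : β₀ < β)
      (h : ∀ n, Relation.TransGen R n m →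
        D R (insert n ℰ) β₀ (insert (true, n) Γ)) : D R ℰ β Γ

/-- `RankLE R β m` says that `m` is accessible for the transitive closure of `R`, with rank at most
`β`: every predecessor `n` of `m` has rank at most some `g n < β`. An inductive predicate allows
`β` to live in any universe, unlike `Acc.rank`, which would be `Ordinal.{0}`-valued on `ℕ`. -/
inductive RankLE (R : ℕ → ℕ → Prop) : Ordinal → ℕ → Prop
  | mk {β : Ordinal} {m : ℕ} (g : ℕ → Ordinal)
      (hlt : ∀ n, Relation.TransGen R n m → g n < β)
      (hg : ∀ n, Relation.TransGen R n m → RankLE R (g n) n) : RankLE R β m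

theorem RankLE.mono {R : ℕ → ℕ → Prop} {β γ : Ordinal} {m : ℕ} (h : RankLE R β m)
    (hβγ : β ≤ γ) : RankLE R γ m := by
  obtain ⟨g, hlt, hg⟩ := h
  exact ⟨g, fun n hn => (hlt n hn).trans_le hβγ, hg⟩

/-- A derivation, of height `β` from `ℰ`, of a sequent without negative literals bounds the rank of
some element of `ℰ` by `β`. -/
theorem D.exists_rankLE {R : ℕ → ℕ → Prop} {ℰ : Finset ℕ} {β : Ordinal}
    {Γ : Finset (Bool × ℕ)} (h : D R ℰ β Γ) (hΓ : ∀ n, (false, n) ∉ Γ) :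
    ∃ m ∈ ℰ, RankLE R β m := by
  induction h with
  | ax n h => exact absurd h (hΓ n)
  | rep γ hγ _ ih =>
    obtain ⟨m, hm, hr⟩ := ih hΓ
    exact ⟨m, hm, hr.mono hγ.le⟩
  | @prg ℰ β Γ m _ hmℰ β₀ hβ₀ _ ih =>
    by_cases hex : ∃ x ∈ ℰ, RankLE R β₀ x
    · obtain ⟨x, hx, hr⟩ := hex
      exact ⟨x, hx, hr.mono hβ₀.le⟩
    · refine ⟨m, hmℰ, fun _ => β₀, fun _ _ => hβ₀, fun n hn => ?_⟩
      obtain ⟨x, hx, hr⟩ := ih n hn (by simpa using hΓ)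
      rcases Finset.mem_insert.1 hx with rfl | hx
      · exact hr
      · exact absurd ⟨x, hx, hr⟩ hex

/-- Theorem 7 (extension of a result of Takeuti): if `E(n)` is derivable with a uniform
ordinal bound `α` from the side set `{n}` for every `n`, then the relation `≺` embeds
into the ordinals below `ω^(α+1)`. -/
theorem takeuti_embedding (R : ℕ → ℕ → Prop) (α : Ordinal)
    (h : ∀ n : ℕ, D R {n} α {(true, n)}) :
    ∃ f : ℕ → Ordinal,
      (∀ n m : ℕ, R n m → f n < f m) ∧ (∀ m : ℕ, f m < omega0 ^ (α + 1)) := by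
  have hα : ∀ n, RankLE R α n := fun n => by
    simpa using (h n).exists_rankLE (by simp)
  refine ⟨fun n => sInf {β | RankLE R β n}, fun n m hnm => ?_, fun m => ?_⟩
  · have hm : RankLE R (sInf {β | RankLE R β m}) m :=
      csInf_mem (s := {β | RankLE R β m}) ⟨α, hα m⟩
    obtain ⟨g, hlt, hg⟩ := hm
    have ht := Relation.TransGen.single hnm
    have hle : sInf {β | RankLE R β n} ≤ g n := csInf_le' (hg n ht)
    exact hle.trans_lt (hlt n ht)
  · calc sInf {β | RankLE R β m} ≤ α := csInf_le' (hα m)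
      _ < α + 1 := lt_add_one α
      _ ≤ omega0 ^ (α + 1) := right_le_opow _ one_lt_omega0
end

section
/- Suppose that for every natural number n there is an ordinal α with D {n} α {(true, n)}. Then the transitive closure ≺* is irreflexive: there is no n with n ≺* n. (First claim in the proof of Theorem 7.) -/
open Ordinal

/-- If `a ≺* a`, the sequent `E(a)` with side set `{a}` has no derivation: a last inference by
`prg` must be at `a`, and its premise for `a ≺* a` is this same sequent with this same side set, so
induction on derivations applies. -/
theorem D.false_of_transGen_self {R : ℕ → ℕ → Prop} {a : ℕ} (ha : Relation.TransGen R a a)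
    {ℰ : Finset ℕ} {β : Ordinal} {Γ : Finset (Bool × ℕ)} (hd : D R ℰ β Γ)
    (hℰ : ℰ = {a}) (hΓ : Γ = {(true, a)}) : False := by
  induction hd with
  | ax n hn => simp [hΓ] at hn
  | rep γ hγ hd ih => exact ih hℰ hΓ
  | prg m hm hmℰ β₀ hβ₀ hd ih =>
    subst hℰ hΓ
    obtain rfl := Finset.mem_singleton.mp hmℰ
    exact ih m ha (by simp) (by simp)

/-- First claim in the proof of Theorem 7: derivability of each `E(n)` from `{n}`
implies that the transitive closure of `≺` is irreflexive. -/
theorem transGen_irrefl_of_derivable (R : ℕ → ℕ → Prop)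
    (h : ∀ n : ℕ, ∃ α : Ordinal, D R {n} α {(true, n)}) :
    ∀ n : ℕ, ¬ Relation.TransGen R n n := by
  intro n hn
  obtain ⟨α, hα⟩ := h n
  exact hα.false_of_transGen_self hn rfl rfl
end

section
/- Assume that ≺* is irreflexive, let α be an ordinal, and let β : ℕ → Ordinal be a function with β m ≤ α for all m, such that β m < β k whenever k < m and m ≺* k. Then there exists a function f : ℕ → Ordinal such that f n < f m whenever n ≺* m, and f m < ω^(α+1) for all m. (One may take f(m) to be the maximum of the natural (Hessenberg) sums ω^(β m₀) # ⋯ # ω^(β m_k) over all chains m₀ ≺* m₁ ≺* ⋯ ≺* m_k = m with m₀, …, m_{k−1} < m; this set of chains is finite because ≺* is irreflexive.) (Embedding construction in the proof of Theorem 7.) -/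
/-!
Write `n ≼ m` for `n = m ∨ n ≺* m`. The embedding is the natural sum
`f m = #_{x ≤ m, x ≼ m} ω ^ β x`, in which chains are not needed. It is encoded as the value
`CNF.eval ω` of the function counting, for each exponent `e`, the `x ≤ m` with `x ≼ m` and
`β x = e`.

Suppose `n ≺* m`. If `x` occurs in the sum for `n` and `β m ≤ β x`, then `x ≺* m`, so `x ≤ m`
by the hypothesis on `β`: `x` also occurs in the sum for `m`, and it is not `m` itself. Hence all
coefficients at exponents `≥ β m` weakly increase from `n` to `m`, and the one at `β m` increases
strictly. Cantor normal forms compare lexicographically from the highest exponent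
(`eval_lt_eval`), so `f n < f m`. All exponents are at most `α`, whence `f m < ω ^ (α + 1)`.
-/

open Ordinal

namespace EmbeddingOfRanks

universe u

/-- Two Cantor normal forms in base `ω` compare as their coefficients do at the largest exponent
where these differ. -/
theorem eval_lt_eval_of_eq {f g : Ordinal.{u} →₀ Ordinal.{u}} (hf : ∀ e, f e < ω) {e : Ordinal.{u}}
    (he : f e < g e) (heq : ∀ e' > e, f e' = g e') : CNF.eval ω f < CNF.eval ω g := by
  have hs {p : Ordinal.{u} → Prop} [DecidablePred p] {h : Ordinal.{u} →₀ Ordinal.{u}} {a}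
      (ha : a ∈ (h.filter p).support) : p a := by
    rw [Finsupp.support_filter] at ha
    exact (Finset.mem_filter.1 ha).2
  have key (h : Ordinal.{u} →₀ Ordinal.{u}) : CNF.eval ω h =
      CNF.eval ω (h.filter (e < ·)) + (ω ^ e * h e + CNF.eval ω (h.filter (· < e))) := by
    rw [← CNF.eval_single_add, ← CNF.eval_add]
    · congr 1
      ext a
      rcases lt_trichotomy a e with h | rfl | h
      · simp [h, h.not_gt, h.ne]
      · simp
      · simp [h, h.not_gt, h.ne']
    · intro e₁ h₁ e₂ h₂
      have h₁' : e < e₁ := hs h₁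
      refine le_trans ?_ h₁'.le
      by_contra! hc
      simp [hc.not_gt, hc.ne'] at h₂
    · intro e' h'
      exact (hs (p := (· < e)) h').le
  rw [key f, key g]
  have hh : f.filter (e < ·) = g.filter (e < ·) := by
    ext a
    by_cases h : e < a
    · simp [h, heq a h]
    · simp [h]
  have hlow : CNF.eval ω (f.filter (· < e)) < ω ^ e := by
    apply CNF.eval_lt
    · intro a
      by_cases h : a < e
      · simpa [h] using hf a
      · simp [h, omega0_pos]
    · intro a h
      exact hs (p := (· < e)) h
  rw [hh]
  gcongr
  calc ω ^ e * f e + CNF.eval ω (f.filter (· < e)) < ω ^ e * f e + ω ^ e := by gcongr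
    _ = ω ^ e * (f e + 1) := by rw [mul_add, mul_one]
    _ ≤ ω ^ e * g e := by
      gcongr
      exact Order.add_one_le_of_lt he
    _ ≤ _ := le_self_add

/-- It suffices that one coefficient increases strictly and the higher ones weakly. -/
theorem eval_lt_eval {f g : Ordinal.{u} →₀ Ordinal.{u}} (hf : ∀ e, f e < ω) {e : Ordinal.{u}}
    (he : f e < g e) (hle : ∀ e' > e, f e' ≤ g e') : CNF.eval ω f < CNF.eval ω g := by
  classical
  have hmem (a) : a ∈ (f.support ∪ g.support).filter (fun a => f a ≠ g a) ↔ f a ≠ g a := by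
    simp only [Finset.mem_filter, Finset.mem_union, Finsupp.mem_support_iff]
    grind
  obtain ⟨d, hd, hmax⟩ := Finset.exists_max_image _ id ⟨e, (hmem e).2 he.ne⟩
  rw [hmem] at hd
  have hed : e ≤ d := hmax e ((hmem e).2 he.ne)
  refine eval_lt_eval_of_eq hf (e := d) ?_ fun e' h' => ?_
  · rcases hed.eq_or_lt with rfl | h
    · exact he
    · exact (hle d h).lt_of_ne hd
  · by_contra hc
    exact (hmax e' ((hmem e').2 hc)).not_gt h'

end EmbeddingOfRanks

open EmbeddingOfRanks in
theorem embedding_of_ranks (R : ℕ → ℕ → Prop)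
    (hirr : ∀ n : ℕ, ¬ Relation.TransGen R n n)
    (α : Ordinal) (β : ℕ → Ordinal)
    (hle : ∀ m : ℕ, β m ≤ α)
    (hdec : ∀ k m : ℕ, k < m → Relation.TransGen R m k → β m < β k) :
    ∃ f : ℕ → Ordinal,
      (∀ n m : ℕ, Relation.TransGen R n m → f n < f m) ∧
      (∀ m : ℕ, f m < omega0 ^ (α + 1)) := by
  classical
  let S (m : ℕ) : Finset ℕ :=
    (Finset.range (m + 1)).filter fun x => x = m ∨ Relation.TransGen R x m
  let c (m : ℕ) : Ordinal →₀ Ordinal :=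
    Finsupp.onFinset ((S m).image β) (fun e => (((S m).filter (β · = e)).card : Ordinal)) <| by
      intro e h
      obtain ⟨x, hx⟩ := Finset.card_ne_zero.1 (Nat.cast_ne_zero.1 h)
      rw [Finset.mem_filter] at hx
      exact Finset.mem_image.2 ⟨x, hx⟩
  have hc (m e) : c m e = (((S m).filter (β · = e)).card : Ordinal) := rfl
  have hω (m e) : c m e < ω := natCast_lt_omega0 _
  refine ⟨fun m => CNF.eval ω (c m), fun n m hnm => ?_, fun m => ?_⟩
  · have hsub {x} (hx : x ∈ S n) (hβ : β m ≤ β x) : x ∈ S m ∧ x ≠ m := by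
      have hxm : Relation.TransGen R x m := by
        rcases (Finset.mem_filter.1 hx).2 with rfl | h
        · exact hnm
        · exact h.trans hnm
      refine ⟨Finset.mem_filter.2 ⟨Finset.mem_range_succ_iff.2 ?_, .inr hxm⟩, ?_⟩
      · by_contra! hlt
        exact (hdec m x hlt hxm).not_ge hβ
      · rintro rfl
        exact hirr _ hxm
    refine eval_lt_eval (hω n) (e := β m) ?_ fun e he => ?_
    · rw [hc, hc, Nat.cast_lt]
      refine Finset.card_lt_card (Finset.ssubset_iff_of_subset ?_ |>.2 ⟨m, ?_, ?_⟩)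
      · intro x hx
        rw [Finset.mem_filter] at hx ⊢
        exact ⟨(hsub hx.1 hx.2.ge).1, hx.2⟩
      · simp [S]
      · intro h
        exact (hsub (Finset.mem_filter.1 h).1 le_rfl).2 rfl
    · rw [hc, hc, Nat.cast_le]
      refine Finset.card_le_card fun x hx => ?_
      rw [Finset.mem_filter] at hx ⊢
      exact ⟨(hsub hx.1 (hx.2 ▸ he.le)).1, hx.2⟩
  · refine CNF.eval_lt (hω m) fun e he => ?_
    obtain ⟨x, -, rfl⟩ := Finset.mem_image.1 (Finsupp.support_onFinset_subset he)
    exact Order.lt_add_one_iff.2 (hle x)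
end

section
/- Assume (indiscernibility) that for every n ∈ ℕ, all strictly monotone maps c, d : Fin n → Y, and all terms s, t : L.Term (Fin n), one has r_Y (s.relabel c) (t.relabel c) ↔ r_Y (s.relabel d) (t.relabel d); and assume (suborder) that there exists a strictly monotone map j : X → Y such that r_X s t ↔ r_Y (s.relabel j) (t.relabel j) for all s, t : L.Term X. Then for every strictly monotone map f : X → Y and all s, t : L.Term X, r_X s t implies r_Y (s.relabel f) (t.relabel f); that is, relabelling along f is an order-preserving map from the term structure over X to the term structure over Y extending f. (Proposition 1.) -/
/-!
A term mentions only finitely many variables, so two terms `s`, `t` over `X` both come from terms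
over `Fin n` by relabelling along the increasing enumeration `e : Fin n → X` of their joint set of
variables (`exists_relabel_eq`). If `j` is the embedding witnessing the suborder hypothesis, then
`j ∘ e` and `f ∘ e` are both increasing `n`-tuples in `Y`, so indiscernibility carries the
comparison from `j` to `f`.
-/

open FirstOrder FirstOrder.Language

/-- A term all of whose variables lie in the range of `e` is a relabelling along `e`; no injectivity
of `e` is needed, since a preimage is chosen separately at each occurrence of a variable. -/
theorem exists_relabel_eq {L : FirstOrder.Language} {Z X : Type*} [DecidableEq X] (e : Z → X)
    (t : L.Term X) (ht : ∀ x ∈ t.varFinset, x ∈ Set.range e) :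
    ∃ t' : L.Term Z, t'.relabel e = t := by
  induction t with
  | var x =>
    obtain ⟨z, rfl⟩ := ht x (by simp [Term.varFinset])
    exact ⟨Term.var z, rfl⟩
  | func F ts ih =>
    choose ts' h using fun i => ih i fun x hx =>
      ht x (by simpa [Term.varFinset] using ⟨i, hx⟩)
    exact ⟨Term.func F ts', by simp [Term.relabel, h]⟩

/-- Proposition 1: under indiscernibility of the generating constants and the suborder
property, relabelling terms along any strictly monotone map `f : X → Y` is an
order-preserving map from the term structure over `X` to the term structure over `Y`. -/
theorem relabel_orderPreserving (L : FirstOrder.Language)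
    (X Y : Type*) [LinearOrder X] [LinearOrder Y]
    (rX : L.Term X → L.Term X → Prop) (rY : L.Term Y → L.Term Y → Prop)
    (indis : ∀ (n : ℕ) (c d : Fin n → Y), StrictMono c → StrictMono d →
      ∀ s t : L.Term (Fin n),
        (rY (s.relabel c) (t.relabel c) ↔ rY (s.relabel d) (t.relabel d)))
    (subord : ∃ j : X → Y, StrictMono j ∧
      ∀ s t : L.Term X, (rX s t ↔ rY (s.relabel j) (t.relabel j)))
    (f : X → Y) (hf : StrictMono f) :
    ∀ s t : L.Term X, rX s t → rY (s.relabel f) (t.relabel f) := by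
  obtain ⟨j, hj, hjr⟩ := subord
  intro s t hst
  obtain ⟨n, e, he⟩ : ∃ (n : ℕ) (e : Fin n ↪o X), Set.range e = ↑(s.varFinset ∪ t.varFinset) :=
    ⟨_, _, Finset.range_orderEmbOfFin _ rfl⟩
  obtain ⟨s', hs⟩ := exists_relabel_eq e s fun x hx => by
    rw [he]; exact Finset.mem_union_left _ hx
  obtain ⟨t', ht⟩ := exists_relabel_eq e t fun x hx => by
    rw [he]; exact Finset.mem_union_right _ hx
  have key := (hjr s t).1 hst
  rw [← hs, ← ht, Term.relabel_relabel, Term.relabel_relabel] at key ⊢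
  exact (indis _ _ _ (hj.comp e.strictMono) (hf.comp e.strictMono) s' t').1 key
end

section
/- Let ρ be an ordinal and let A be a formula which is either a disjunction ⋁f or a literal not belonging to S, with rk A ≤ ρ. If ⊢ρ^β (Γ ∪ {¬A}) and ⊢ρ^α (Δ ∪ {A}), then ⊢ρ^(β+α) (Γ ∪ Δ). (Cut-reduction lemma from the proof of Proposition 3.) -/
/-!
Cut reduction goes by induction on the derivation of `Δ, A`, with the derivation of `Γ, ¬A` fixed.
Inferences whose principal formula is not `A` are re-applied after the induction hypothesis
(`β + γ < β + α` whenever `γ < α`).  If `A` is a literal outside `S`, it can be principal only in a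
complementary-pair axiom; then `¬A ∈ Δ`, and the derivation of `Γ, ¬A` is weakened to `Γ ∪ Δ`.
If `A = ⋁ f` is introduced from `f i`, the derivation of `Γ, ⋀ (¬ f i)` is inverted to one of
`Γ, ¬ f i` of the same height (`Der.conj_inversion`), and a cut on `f i`, whose rank is below
`rk A ≤ ρ`, finishes the step.
-/

open Ordinal
open scoped Classical

/-- Infinitary propositional formulas. -/
inductive Fm : Type where
  | pos : ℕ → Fm
  | neg : ℕ → Fm
  | disj : (ℕ → Fm) → Fm
  | conj : (ℕ → Fm) → Fm

namespace Fm

/-- Negation, defined by recursion via De Morgan. -/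
def not : Fm → Fm
  | pos n => neg n
  | neg n => pos n
  | disj f => conj (fun i => (f i).not)
  | conj f => disj (fun i => (f i).not)

/-- The rank of a formula. -/
noncomputable def rk : Fm → Ordinal
  | pos _ => 0
  | neg _ => 0
  | disj f => (⨆ n, (f n).rk) + 1
  | conj f => (⨆ n, (f n).rk) + 1

/-- A literal is a formula of the form `pos n` or `neg n`. -/
def IsLiteral (A : Fm) : Prop := (∃ n, A = pos n) ∨ (∃ n, A = neg n)

end Fm

/-- The infinitary derivability relation `⊢ρ^β Γ` with true literal axioms from `S`
and cut formulas of rank `< ρ`. -/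
inductive Der (S : Set Fm) (ρ : Ordinal) : Ordinal → Finset Fm → Prop
  | ax1 {β : Ordinal} {Γ : Finset Fm} (n : ℕ)
      (h1 : Fm.pos n ∈ Γ) (h2 : Fm.neg n ∈ Γ) : Der S ρ β Γ
  | ax2 {β : Ordinal} {Γ : Finset Fm} (L : Fm) (hL : L ∈ S) (h : L ∈ Γ) : Der S ρ β Γ
  | disj {β : Ordinal} {Γ : Finset Fm} (f : ℕ → Fm) (hf : Fm.disj f ∈ Γ)
      (i : ℕ) (γ : Ordinal) (hγ : γ < β)
      (h : Der S ρ γ (insert (f i) Γ)) : Der S ρ β Γ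
  | conj {β : Ordinal} {Γ : Finset Fm} (f : ℕ → Fm) (hf : Fm.conj f ∈ Γ)
      (γ : Ordinal) (hγ : γ < β)
      (h : ∀ i : ℕ, Der S ρ γ (insert (f i) Γ)) : Der S ρ β Γ
  | cut {β : Ordinal} {Γ : Finset Fm} (A : Fm) (hA : A.rk < ρ)
      (γ : Ordinal) (hγ : γ < β)
      (h1 : Der S ρ γ (insert A Γ)) (h2 : Der S ρ γ (insert A.not Γ)) : Der S ρ β Γ

theorem Fm.rk_lt_rk_disj.{u} (f : ℕ → Fm) (i : ℕ) : Fm.rk.{u} (f i) < Fm.rk.{u} (Fm.disj f) := by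
  rw [Fm.rk, Order.lt_add_one_iff]
  exact le_ciSup (f := fun n => Fm.rk.{u} (f n)) Ordinal.bddAbove_of_small i

theorem Der.weaken {S : Set Fm} {ρ : Ordinal} {β : Ordinal} {Γ : Finset Fm}
    (h : Der S ρ β Γ) : ∀ {β' : Ordinal} {Δ : Finset Fm}, β ≤ β' → Γ ⊆ Δ → Der S ρ β' Δ := by
  induction h with
  | ax1 n h1 h2 => intro β' Δ _ hΔ; exact .ax1 n (hΔ h1) (hΔ h2)
  | ax2 L hL h => intro β' Δ _ hΔ; exact .ax2 L hL (hΔ h)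
  | disj f hf i γ hγ _ ih =>
    intro β' Δ hβ hΔ
    exact .disj f (hΔ hf) i γ (hγ.trans_le hβ) (ih le_rfl (Finset.insert_subset_insert _ hΔ))
  | conj f hf γ hγ _ ih =>
    intro β' Δ hβ hΔ
    exact .conj f (hΔ hf) γ (hγ.trans_le hβ)
      (fun i => ih i le_rfl (Finset.insert_subset_insert _ hΔ))
  | cut A hA γ hγ _ _ ih1 ih2 =>
    intro β' Δ hβ hΔ
    exact .cut A hA γ (hγ.trans_le hβ) (ih1 le_rfl (Finset.insert_subset_insert _ hΔ))
      (ih2 le_rfl (Finset.insert_subset_insert _ hΔ))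

theorem insert_subset_insert_insert {Θ Γ : Finset Fm} {A : Fm} (B : Fm)
    (h : Θ ⊆ insert A Γ) : insert B Θ ⊆ insert A (insert B Γ) := by
  rw [Finset.insert_comm]
  exact Finset.insert_subset_insert _ h

/-- Inversion for conjunctions, preserving height and cut rank.  The conclusion is stated for every
`Θ ⊆ Γ, ⋀ g`, so that the induction does not depend on whether `⋀ g` also occurs in `Γ`. -/
theorem Der.conj_inversion {S : Set Fm} (hS : ∀ L ∈ S, L.IsLiteral) {ρ : Ordinal}
    (g : ℕ → Fm) (i : ℕ) {β : Ordinal} {Θ : Finset Fm} (h : Der S ρ β Θ) :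
    ∀ Γ : Finset Fm, Θ ⊆ insert (Fm.conj g) Γ → Der S ρ β (insert (g i) Γ) := by
  induction h with
  | ax1 n h1 h2 =>
    intro Γ hΓ
    have h1 := hΓ h1
    have h2 := hΓ h2
    exact .ax1 n (by simp_all) (by simp_all)
  | ax2 L hL h =>
    intro Γ hΓ
    have h := hΓ h
    refine .ax2 L hL (Finset.mem_insert_of_mem (Finset.mem_of_mem_insert_of_ne h ?_))
    rintro rfl
    simpa [Fm.IsLiteral] using hS _ hL
  | disj f hf j γ hγ _ ih =>
    intro Γ hΓ
    have hf := hΓ hf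
    refine .disj f (by simp_all) j γ hγ ?_
    rw [Finset.insert_comm]
    exact ih _ (insert_subset_insert_insert _ hΓ)
  | conj f hf γ hγ _ ih =>
    intro Γ hΓ
    rcases Finset.mem_insert.1 (hΓ hf) with hfg | hf
    · cases hfg
      have := ih i _ (insert_subset_insert_insert _ hΓ)
      rw [Finset.insert_idem] at this
      exact this.weaken hγ.le subset_rfl
    · refine .conj f (Finset.mem_insert_of_mem hf) γ hγ fun j => ?_
      rw [Finset.insert_comm]
      exact ih j _ (insert_subset_insert_insert _ hΓ)
  | cut A hA γ hγ _ _ ih1 ih2 =>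
    intro Γ hΓ
    refine .cut A hA γ hγ ?_ ?_ <;> rw [Finset.insert_comm]
    · exact ih1 _ (insert_subset_insert_insert _ hΓ)
    · exact ih2 _ (insert_subset_insert_insert _ hΓ)

/-- Cut-reduction lemma from the proof of Proposition 3. -/
theorem cut_reduction (S : Set Fm) (hS : ∀ L ∈ S, L.IsLiteral)
    (ρ : Ordinal) (A : Fm)
    (hA : (∃ f : ℕ → Fm, A = Fm.disj f) ∨ (A.IsLiteral ∧ A ∉ S))
    (hrk : A.rk ≤ ρ) (β α : Ordinal) (Γ Δ : Finset Fm)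
    (h1 : Der S ρ β (Γ ∪ {A.not})) (h2 : Der S ρ α (Δ ∪ {A})) :
    Der S ρ (β + α) (Γ ∪ Δ) := by
  have h1' : ∀ {Δ : Finset Fm} {α : Ordinal}, A.not ∈ Δ → Der S ρ (β + α) (Γ ∪ Δ) := by
    intro Δ α hmem
    refine h1.weaken le_self_add (Finset.union_subset_union_right ?_)
    simpa using hmem
  have hAS : A ∉ S := by
    rcases hA with ⟨f, rfl⟩ | hA
    · intro h
      simpa [Fm.IsLiteral] using hS _ h
    · exact hA.2
  have hAconj : ∀ f, Fm.conj f ≠ A := by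
    rintro f rfl
    simp [Fm.IsLiteral] at hA
  -- `Δ` is generalized through an inclusion, so that `A` may also occur in `Δ` itself.
  suffices H : ∀ {Θ : Finset Fm}, Der S ρ α Θ → ∀ Δ : Finset Fm, Θ ⊆ insert A Δ →
      Der S ρ (β + α) (Γ ∪ Δ) by
    refine H h2 Δ ?_
    rw [Finset.union_comm, Finset.insert_eq]
  clear h2
  intro Θ h2
  induction h2 with
  | ax1 n hp hn =>
    intro Δ hΔ
    rcases Finset.mem_insert.1 (hΔ hp) with rfl | hp
    · exact h1' (Finset.mem_of_mem_insert_of_ne (hΔ hn) (by simp [Fm.not]))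
    rcases Finset.mem_insert.1 (hΔ hn) with rfl | hn
    · exact h1' hp
    exact .ax1 n (Finset.mem_union_right _ hp) (Finset.mem_union_right _ hn)
  | ax2 L hL h =>
    intro Δ hΔ
    refine .ax2 L hL (Finset.mem_union_right _ (Finset.mem_of_mem_insert_of_ne (hΔ h) ?_))
    rintro rfl
    exact hAS hL
  | disj f hf i γ hγ _ ih =>
    intro Δ hΔ
    have hlt := (add_lt_add_iff_left β).2 hγ
    have ihf := ih _ (insert_subset_insert_insert _ hΔ)
    rw [Finset.union_insert] at ihf
    rcases Finset.mem_insert.1 (hΔ hf) with rfl | hf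
    · refine .cut (f i) ((Fm.rk_lt_rk_disj f i).trans_le hrk) _ hlt ihf ?_
      refine (Der.conj_inversion hS (fun i => (f i).not) i h1 Γ ?_).weaken le_self_add
        (Finset.insert_subset_insert _ Finset.subset_union_left)
      rw [Finset.union_comm, Finset.insert_eq, Fm.not]
    · exact .disj f (Finset.mem_union_right _ hf) i _ hlt ihf
  | conj f hf γ hγ _ ih =>
    intro Δ hΔ
    have hf := Finset.mem_of_mem_insert_of_ne (hΔ hf) (hAconj f)
    refine .conj f (Finset.mem_union_right _ hf) _ ((add_lt_add_iff_left β).2 hγ) fun i => ?_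
    rw [← Finset.union_insert]
    exact ih i _ (insert_subset_insert_insert _ hΔ)
  | cut B hB γ hγ _ _ ih1 ih2 =>
    intro Δ hΔ
    refine .cut B hB _ ((add_lt_add_iff_left β).2 hγ) ?_ ?_ <;> rw [← Finset.union_insert]
    · exact ih1 _ (insert_subset_insert_insert _ hΔ)
    · exact ih2 _ (insert_subset_insert_insert _ hΔ)
end

section
/- Assume that for no n do both pos n and neg n belong to S. Let p ∈ ℕ and let β be an ordinal. If ⊢p^β Γ (a derivation of depth at most β in which every cut formula has rank < p), then ⊢0^(2_p(β)) Γ, i.e. Γ has a cut-free derivation of depth at most 2_p(β), where 2_0(β) = β and 2_{k+1}(β) = 2^(2_k(β)) with ordinal exponentiation base 2. (Proposition 3, cut elimination with iterated-exponential bound.) -/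
/-!
The proof is Tait's: cuts of maximal rank are removed one rank at a time, each pass costing one
exponential.

The key is the reduction lemma `Der.reduce`: a cut of rank at most `ρ` on `A` against `¬A`, whose
premises have height `α` and cuts of rank `< ρ`, can be replaced by a derivation of height `α + α`
whose cuts have rank `< ρ`.
For `A = ⋁ f` one follows the derivation containing `⋁ f`; wherever it is introduced from `f i`,
`Der.conj_inversion` turns the other premise into a derivation of `¬(f i)`, and a cut on `f i`
takes over. For a literal `A = pos n`, consistency of `S` ensures that an axiom introducing `neg n`
by membership in `S` makes `pos n` redundant in the other premise.

When both premises have height `2 ^ γ` with `γ < β`, the reduced derivation has height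
`2 ^ γ + 2 ^ γ = 2 ^ (γ + 1) ≤ 2 ^ β`, whence `Der.lower_rank` and, by iteration, the theorem.
-/

open Ordinal
open scoped Classical

/-- The iterated exponential `2_p(β)`: `2_0(β) = β` and `2_{k+1}(β) = 2^(2_k(β))`. -/
noncomputable def iterExp : ℕ → Ordinal → Ordinal
  | 0, β => β
  | k + 1, β => (2 : Ordinal) ^ iterExp k β

namespace Fm

theorem not_not (A : Fm) : A.not.not = A := by
  induction A with
  | pos n => rfl
  | neg n => rfl
  | disj f ih => simp [Fm.not, ih]
  | conj f ih => simp [Fm.not, ih]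

theorem rk_not (A : Fm) : A.not.rk = A.rk := by
  induction A with
  | pos n => rfl
  | neg n => rfl
  | disj f ih => simp [Fm.not, rk, ih]
  | conj f ih => simp [Fm.not, rk, ih]

theorem rk_lt_disj.{u} (f : ℕ → Fm) (i : ℕ) : rk.{u} (f i) < rk.{u} (disj f) := by
  rw [rk, ← Order.succ_eq_add_one, Order.lt_succ_iff]
  exact le_ciSup (f := fun n => rk.{u} (f n)) Ordinal.bddAbove_of_small i

end Fm

namespace Der

variable {S : Set Fm} {ρ : Ordinal} {β : Ordinal}

theorem mono_height {Γ : Finset Fm} (h : Der S ρ β Γ) {δ : Ordinal} (hβ : β ≤ δ) :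
    Der S ρ δ Γ := by
  cases h with
  | ax1 n h1 h2 => exact .ax1 n h1 h2
  | ax2 L hL h => exact .ax2 L hL h
  | disj f hf i γ hγ h => exact .disj f hf i γ (hγ.trans_le hβ) h
  | conj f hf γ hγ h => exact .conj f hf γ (hγ.trans_le hβ) h
  | cut A hA γ hγ h1 h2 => exact .cut A hA γ (hγ.trans_le hβ) h1 h2

theorem weaken_s10 {Δ : Finset Fm} (h : Der S ρ β Δ) : ∀ {Γ : Finset Fm}, Δ ⊆ Γ → Der S ρ β Γ := by
  induction h with
  | ax1 n h1 h2 => exact fun hs => .ax1 n (hs h1) (hs h2)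
  | ax2 L hL h => exact fun hs => .ax2 L hL (hs h)
  | disj f hf i γ hγ h ih =>
    exact fun hs => .disj f (hs hf) i γ hγ (ih (Finset.insert_subset_insert _ hs))
  | conj f hf γ hγ h ih =>
    exact fun hs => .conj f (hs hf) γ hγ fun i => ih i (Finset.insert_subset_insert _ hs)
  | cut A hA γ hγ h1 h2 ih1 ih2 =>
    exact fun hs => .cut A hA γ hγ (ih1 (Finset.insert_subset_insert _ hs))
      (ih2 (Finset.insert_subset_insert _ hs))

theorem insert_subset_swap {A B : Fm} {Δ Γ : Finset Fm} (hs : Δ ⊆ insert A Γ) :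
    insert B Δ ⊆ insert A (insert B Γ) := by
  rw [Finset.insert_comm]
  exact Finset.insert_subset_insert _ hs

/-- `∧`-inversion: a conjunction may be replaced by any of its conjuncts at no cost in height.
Axioms are unaffected because `S` consists of literals. -/
theorem conj_inversion_s10 (hS : ∀ L ∈ S, L.IsLiteral) {Δ : Finset Fm} (h : Der S ρ β Δ)
    (f : ℕ → Fm) (i : ℕ) :
    ∀ {Γ : Finset Fm}, Δ ⊆ insert (Fm.conj f) Γ → Der S ρ β (insert (f i) Γ) := by
  induction h with
  | ax1 n h1 h2 =>
    intro Γ hs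
    have h1 := hs h1
    have h2 := hs h2
    simp only [Finset.mem_insert, reduceCtorEq, false_or] at h1 h2
    exact .ax1 n (Finset.mem_insert_of_mem h1) (Finset.mem_insert_of_mem h2)
  | ax2 L hL h =>
    intro Γ hs
    rcases Finset.mem_insert.1 (hs h) with rfl | h
    · simpa [Fm.IsLiteral] using hS _ hL
    · exact .ax2 L hL (Finset.mem_insert_of_mem h)
  | disj g hg j γ hγ h ih =>
    intro Γ hs
    have hg := hs hg
    simp only [Finset.mem_insert, reduceCtorEq, false_or] at hg
    refine .disj g (Finset.mem_insert_of_mem hg) j γ hγ ?_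
    rw [Finset.insert_comm]
    exact ih (insert_subset_swap hs)
  | conj g hg γ hγ h ih =>
    intro Γ hs
    rcases Finset.mem_insert.1 (hs hg) with hg | hg
    · obtain rfl := Fm.conj.inj hg
      simpa using (ih i (insert_subset_swap hs)).mono_height hγ.le
    · refine .conj g (Finset.mem_insert_of_mem hg) γ hγ fun j => ?_
      rw [Finset.insert_comm]
      exact ih j (insert_subset_swap hs)
  | cut A hA γ hγ h1 h2 ih1 ih2 =>
    intro Γ hs
    refine .cut A hA γ hγ ?_ ?_ <;> rw [Finset.insert_comm]
    · exact ih1 (insert_subset_swap hs)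
    · exact ih2 (insert_subset_swap hs)

/-- A literal `pos n` that is false, in the sense that `neg n` is an axiom, may be dropped. -/
theorem drop_false_pos (hS' : ∀ n : ℕ, ¬ (Fm.pos n ∈ S ∧ Fm.neg n ∈ S)) {Δ : Finset Fm}
    (h : Der S ρ β Δ) {n : ℕ} (hn : Fm.neg n ∈ S) :
    ∀ {Γ : Finset Fm}, Δ ⊆ insert (Fm.pos n) Γ → Der S ρ β Γ := by
  induction h with
  | ax1 m h1 h2 =>
    intro Γ hs
    have h2 := hs h2
    simp only [Finset.mem_insert, reduceCtorEq, false_or] at h2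
    rcases Finset.mem_insert.1 (hs h1) with h1 | h1
    · obtain rfl := Fm.pos.inj h1
      exact .ax2 _ hn h2
    · exact .ax1 m h1 h2
  | ax2 L hL h =>
    intro Γ hs
    rcases Finset.mem_insert.1 (hs h) with rfl | h
    · exact absurd ⟨hL, hn⟩ (hS' n)
    · exact .ax2 L hL h
  | disj g hg j γ hγ h ih =>
    intro Γ hs
    have hg := hs hg
    simp only [Finset.mem_insert, reduceCtorEq, false_or] at hg
    exact .disj g hg j γ hγ (ih (insert_subset_swap hs))
  | conj g hg γ hγ h ih =>
    intro Γ hs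
    have hg := hs hg
    simp only [Finset.mem_insert, reduceCtorEq, false_or] at hg
    exact .conj g hg γ hγ fun j => ih j (insert_subset_swap hs)
  | cut A hA γ hγ h1 h2 ih1 ih2 =>
    exact fun hs => .cut A hA γ hγ (ih1 (insert_subset_swap hs)) (ih2 (insert_subset_swap hs))

/-- Reduction of a cut on a literal, by induction on the premise containing `neg n`. -/
theorem reduce_pos (hS' : ∀ n : ℕ, ¬ (Fm.pos n ∈ S ∧ Fm.neg n ∈ S)) {Δ : Finset Fm}
    (h : Der S ρ β Δ) {n : ℕ} {α : Ordinal} :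
    ∀ {Γ : Finset Fm}, Δ ⊆ insert (Fm.neg n) Γ → Der S ρ α (insert (Fm.pos n) Γ) →
      Der S ρ (α + β) Γ := by
  induction h with
  | ax1 m h1 h2 =>
    intro Γ hs hp
    have h1 := hs h1
    simp only [Finset.mem_insert, reduceCtorEq, false_or] at h1
    rcases Finset.mem_insert.1 (hs h2) with h2 | h2
    · obtain rfl := Fm.neg.inj h2
      -- `pos m` is already in `Γ`, so the other premise derives `Γ` itself.
      rw [Finset.insert_eq_of_mem h1] at hp
      exact hp.mono_height le_self_add
    · exact .ax1 m h1 h2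
  | ax2 L hL h =>
    intro Γ hs hp
    rcases Finset.mem_insert.1 (hs h) with rfl | h
    · exact (hp.drop_false_pos hS' hL subset_rfl).mono_height le_self_add
    · exact .ax2 L hL h
  | disj g hg j γ hγ h ih =>
    intro Γ hs hp
    have hg := hs hg
    simp only [Finset.mem_insert, reduceCtorEq, false_or] at hg
    exact .disj g hg j (α + γ) (by gcongr) (ih (insert_subset_swap hs)
      (hp.weaken_s10 (Finset.insert_subset_insert _ (Finset.subset_insert _ _))))
  | conj g hg γ hγ h ih =>
    intro Γ hs hp
    have hg := hs hg
    simp only [Finset.mem_insert, reduceCtorEq, false_or] at hg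
    exact .conj g hg (α + γ) (by gcongr) fun j => ih j (insert_subset_swap hs)
      (hp.weaken_s10 (Finset.insert_subset_insert _ (Finset.subset_insert _ _)))
  | cut A hA γ hγ h1 h2 ih1 ih2 =>
    intro Γ hs hp
    exact .cut A hA (α + γ) (by gcongr)
      (ih1 (insert_subset_swap hs)
        (hp.weaken_s10 (Finset.insert_subset_insert _ (Finset.subset_insert _ _))))
      (ih2 (insert_subset_swap hs)
        (hp.weaken_s10 (Finset.insert_subset_insert _ (Finset.subset_insert _ _))))

/-- Reduction of a cut on `⋁ f`, by induction on the premise containing `⋁ f`. -/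
theorem reduce_disj (hS : ∀ L ∈ S, L.IsLiteral) {Δ : Finset Fm}
    (h : Der S ρ β Δ) {f : ℕ → Fm} (hf : ∀ i, (f i).rk < ρ) {α : Ordinal} :
    ∀ {Γ : Finset Fm}, Δ ⊆ insert (Fm.disj f) Γ → Der S ρ α (insert (Fm.disj f).not Γ) →
      Der S ρ (α + β) Γ := by
  induction h with
  | ax1 m h1 h2 =>
    intro Γ hs hp
    have h1 := hs h1
    have h2 := hs h2
    simp only [Finset.mem_insert, reduceCtorEq, false_or] at h1 h2
    exact .ax1 m h1 h2
  | ax2 L hL h =>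
    intro Γ hs hp
    rcases Finset.mem_insert.1 (hs h) with rfl | h
    · simpa [Fm.IsLiteral] using hS _ hL
    · exact .ax2 L hL h
  | disj g hg j γ hγ h ih =>
    intro Γ hs hp
    have key := ih (insert_subset_swap hs)
      (hp.weaken_s10 (Finset.insert_subset_insert _ (Finset.subset_insert _ _)))
    rcases Finset.mem_insert.1 (hs hg) with hg | hg
    · obtain rfl := Fm.disj.inj hg
      -- The principal case: the cut on `⋁ g` becomes a cut on its disjunct `g j`.
      exact .cut (g j) (hf j) (α + γ) (by gcongr) key
        ((hp.conj_inversion_s10 hS (fun i => (g i).not) j subset_rfl).mono_height le_self_add)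
    · exact .disj g hg j (α + γ) (by gcongr) key
  | conj g hg γ hγ h ih =>
    intro Γ hs hp
    have hg := hs hg
    simp only [Finset.mem_insert, reduceCtorEq, false_or] at hg
    exact .conj g hg (α + γ) (by gcongr) fun j => ih j (insert_subset_swap hs)
      (hp.weaken_s10 (Finset.insert_subset_insert _ (Finset.subset_insert _ _)))
  | cut A hA γ hγ h1 h2 ih1 ih2 =>
    intro Γ hs hp
    exact .cut A hA (α + γ) (by gcongr)
      (ih1 (insert_subset_swap hs)
        (hp.weaken_s10 (Finset.insert_subset_insert _ (Finset.subset_insert _ _))))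
      (ih2 (insert_subset_swap hs)
        (hp.weaken_s10 (Finset.insert_subset_insert _ (Finset.subset_insert _ _))))

/-- The reduction lemma: a cut of rank at most `ρ` between two derivations of equal height `α`
whose own cuts have rank `< ρ`. Equal heights make the bound symmetric, so that the premises can
be exchanged when the cut formula is `neg n` or a conjunction. -/
theorem reduce (hS : ∀ L ∈ S, L.IsLiteral) (hS' : ∀ n : ℕ, ¬ (Fm.pos n ∈ S ∧ Fm.neg n ∈ S))
    {A : Fm} (hA : A.rk ≤ ρ) {α : Ordinal} {Γ : Finset Fm}
    (h1 : Der S ρ α (insert A Γ)) (h2 : Der S ρ α (insert A.not Γ)) : Der S ρ (α + α) Γ := by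
  cases A with
  | pos n => exact h2.reduce_pos hS' subset_rfl h1
  | neg n => exact h1.reduce_pos hS' subset_rfl h2
  | disj f =>
    exact h1.reduce_disj hS (fun i => (Fm.rk_lt_disj f i).trans_le hA) subset_rfl h2
  | conj f =>
    have hA' : (Fm.disj fun i => (f i).not).rk ≤ ρ := (Fm.rk_not (Fm.conj f)).trans_le hA
    rw [← Fm.not_not (Fm.conj f)] at h1
    exact h2.reduce_disj hS (fun i => (Fm.rk_lt_disj _ i).trans_le hA') subset_rfl h1

/-- One pass of cut elimination: cuts of rank exactly `ρ` are removed at the cost of one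
exponential. -/
theorem lower_rank (hS : ∀ L ∈ S, L.IsLiteral)
    (hS' : ∀ n : ℕ, ¬ (Fm.pos n ∈ S ∧ Fm.neg n ∈ S)) {Γ : Finset Fm}
    (h : Der S (ρ + 1) β Γ) : Der S ρ (2 ^ β) Γ := by
  have hdouble (x : Ordinal) : x * 2 = x + x := by
    rw [← one_add_one_eq_two, mul_add, mul_one]
  have hpow {γ δ : Ordinal} (hγ : γ < δ) : (2 : Ordinal) ^ γ < 2 ^ δ :=
    (Ordinal.opow_lt_opow_iff_right one_lt_two).2 hγ
  induction h with
  | ax1 n h1 h2 => exact .ax1 n h1 h2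
  | ax2 L hL h => exact .ax2 L hL h
  | disj f hf i γ hγ h ih => exact .disj f hf i _ (hpow hγ) ih
  | conj f hf γ hγ h ih => exact .conj f hf _ (hpow hγ) ih
  | @cut δ Γ A hA γ hγ h1 h2 ih1 ih2 =>
    rw [← Order.succ_eq_add_one, Order.lt_succ_iff] at hA
    refine (reduce hS hS' hA ih1 ih2).mono_height ?_
    calc (2 : Ordinal) ^ γ + 2 ^ γ = 2 ^ Order.succ γ := by rw [Ordinal.opow_succ, hdouble]
      _ ≤ 2 ^ δ := Ordinal.opow_le_opow_right two_pos (Order.succ_le_of_lt hγ)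

/-- A cut-free derivation does not depend on the universe of the ordinal bounding cut ranks. -/
theorem of_zero.{u, v, w} {S : Set Fm} {β : Ordinal.{w}} {Γ : Finset Fm}
    (h : Der S (0 : Ordinal.{u}) β Γ) : Der S (0 : Ordinal.{v}) β Γ := by
  induction h with
  | ax1 n h1 h2 => exact .ax1 n h1 h2
  | ax2 L hL h => exact .ax2 L hL h
  | disj f hf i γ hγ h ih => exact .disj f hf i γ hγ ih
  | conj f hf γ hγ h ih => exact .conj f hf γ hγ ih
  | cut A hA γ hγ h1 h2 ih1 ih2 => exact absurd hA not_lt_zero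

end Der

theorem iterExp_two_opow (p : ℕ) (β : Ordinal) : iterExp p (2 ^ β) = iterExp (p + 1) β := by
  induction p with
  | zero => rfl
  | succ p ih => rw [iterExp, ih, ← iterExp]

/-- Proposition 3: cut elimination with an iterated-exponential bound. -/
theorem cut_elimination (S : Set Fm) (hS : ∀ L ∈ S, L.IsLiteral)
    (hS' : ∀ n : ℕ, ¬ (Fm.pos n ∈ S ∧ Fm.neg n ∈ S))
    (p : ℕ) (β : Ordinal) (Γ : Finset Fm)
    (h : Der S (p : Ordinal) β Γ) :
    Der S 0 (iterExp p β) Γ := by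
  induction p generalizing β with
  | zero =>
    rw [Nat.cast_zero] at h
    exact h.of_zero
  | succ p ih =>
    rw [← iterExp_two_opow]
    rw [Nat.cast_succ] at h
    exact ih _ (h.lower_rank hS hS')
end
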